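/- For each n ≥ 6, the number of pairs (H, Δ), where H is an n-vertex path-like maximal outerplanar graph and Δ is an ear of H, is at least 2^{n−5}. -/

import Mathlib

open SimpleGraph

def HasMinor {V W : Type*} (G : SimpleGraph V) (H : SimpleGraph W) : Prop :=
  ∃ f : W → Set V,
    (∀ w, (f w).Nonempty) ∧
    (∀ w, (G.induce (f w)).Connected) ∧
    (Pairwise fun w₁ w₂ => Disjoint (f w₁) (f w₂)) ∧
    ∀ ⦃w₁ w₂⦄, H.Adj w₁ w₂ → ∃ a ∈ f w₁, ∃ b ∈ f w₂, G.Adj a b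

def IsPlanar {V : Type*} (G : SimpleGraph V) : Prop :=
  ¬ HasMinor G (completeGraph (Fin 5)) ∧
  ¬ HasMinor G (completeBipartiteGraph (Fin 3) (Fin 3))

def IsOuterplanar {V : Type*} (G : SimpleGraph V) : Prop :=
  ¬ HasMinor G (completeGraph (Fin 4)) ∧
  ¬ HasMinor G (completeBipartiteGraph (Fin 2) (Fin 3))

def Contains {V W : Type*} (G : SimpleGraph V) (H : SimpleGraph W) : Prop :=
  ∃ f : W ↪ V, ∀ ⦃a b⦄, H.Adj a b → G.Adj (f a) (f b)

/-- The caterpillar with spine a path on `k` vertices, each spine vertex having `m` leaves. -/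
def caterpillar (k m : ℕ) : SimpleGraph (Fin k ⊕ Fin k × Fin m) :=
  SimpleGraph.fromRel (fun a b =>
    match a, b with
    | Sum.inl i, Sum.inl j => (i : ℕ) + 1 = (j : ℕ)
    | Sum.inl i, Sum.inr p => i = p.1
    | _, _ => False)

/-- A maximal outerplanar graph: adding any missing edge destroys outerplanarity. -/
def IsMaxOuterplanar {V : Type*} (G : SimpleGraph V) : Prop :=
  IsOuterplanar G ∧ ∀ a b : V, a ≠ b → ¬ G.Adj a b →
    ¬ IsOuterplanar (G ⊔ SimpleGraph.fromEdgeSet {s(a, b)})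

/-- A path-like outerplanar graph: a maximal outerplanar graph whose weak dual is a path.
For a maximal outerplanar graph on at least 4 vertices, the leaves of the (tree) weak dual
are exactly the ears, which correspond to vertices of degree 2; so the weak dual is a path
iff there are exactly two vertices of degree 2. -/
def IsPathLike {V : Type*} [Fintype V] (G : SimpleGraph V) : Prop :=
  IsMaxOuterplanar G ∧ {v : V | (G.neighborSet v).ncard = 2}.ncard = 2

/-- Pairs `(H, Δ)` of an `n`-vertex path-like maximal outerplanar graph together with an ear,
encoded by the degree-2 vertex of the ear triangle, up to isomorphism of pairs. -/
def earSetoid (n : ℕ) :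
    Setoid {p : SimpleGraph (Fin n) × Fin n //
      IsPathLike p.1 ∧ (p.1.neighborSet p.2).ncard = 2} where
  r P Q := ∃ e : P.1.1 ≃g Q.1.1, e P.1.2 = Q.1.2
  iseqv := by
    refine ⟨fun P => ⟨RelIso.refl _, rfl⟩, ?_, ?_⟩
    · rintro P Q ⟨e, he⟩
      exact ⟨e.symm, by simp [← he]⟩
    · rintro P Q R ⟨e, he⟩ ⟨f, hf⟩
      exact ⟨e.trans f, by simp [RelIso.trans_apply, he, hf]⟩

/-!
Glue triangles one at a time: a sequence `s` of sides tells on which side of the growing strip each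
new vertex is placed, and it is joined to the last vertex of either side. Drawn on a circle, the
edges of the strip form a maximal set of pairwise noncrossing chords, and this is what makes the
strip a maximal outerplanar graph. On the one hand, noncrossing drawings pass to minors, while `K₄`
and `K₂,₃` have none: opposite vertices of a 4-cycle separate each other on the circle, so the
diagonals of `K₄` cross and the three leaves of `K₂,₃` would lie pairwise on opposite sides of the
two hubs. On the other hand, an added chord crosses an edge, and the four arcs between their ends
contract to `K₄`.

Let the first four vertices alternate. Then the marked ear at `0` has neighbours of degrees 3 and at
least 4, so an isomorphism of marked strips fixes the vertices `0` and `1`, and then every further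
vertex, the only new one joined to the last vertex of either side. The sides of all vertices but the
last can be read off the strip, which leaves `n - 5` free bits.
-/

section CircularOrder

variable {α : Type*} [CircularOrder α] {a b c d : α}

theorem sbtw_or_sbtw_of_ne (hab : a ≠ b) (hbc : b ≠ c) (hca : c ≠ a) :
    sbtw a b c ∨ sbtw c b a := by
  by_contra! h
  rcases (btw_iff_not_sbtw.2 h.2).antisymm (btw_iff_not_sbtw.2 h.1) with h | h | h
  exacts [hab h, hbc h, hca h]

theorem ne_of_sbtw_left (h : sbtw a b c) : a ≠ b := by
  rintro rfl
  exact sbtw_irrefl_left h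

theorem ne_of_sbtw_left_right (h : sbtw a b c) : a ≠ c := by
  rintro rfl
  exact sbtw_irrefl_left_right h

theorem sbtw_right_of_sbtw_of_sbtw (habc : sbtw a b c) (hcda : sbtw c d a) : sbtw b c d :=
  (hcda.trans_right habc.cyclic_right).cyclic_right

/-- The half-open arc `[a, b)` of a circular order, the companion of Mathlib's `Set.cIcc` and
`Set.cIoo`. For `b = a` it is `{a}`, not the whole circle. -/
def cIco (a b : α) : Set α := {x | x = a ∨ sbtw a x b}

theorem left_mem_cIco (a b : α) : a ∈ cIco a b := .inl rfl

theorem right_notMem_cIco (hab : a ≠ b) : b ∉ cIco a b :=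
  fun h => h.elim (fun h => hab h.symm) sbtw_irrefl_right

theorem cIco_subset_cIco (h : sbtw a b c) : cIco a b ⊆ cIco a c :=
  fun _ hx => hx.imp_right fun hx => hx.trans_right h

theorem cIco_subset_cIco_of_mem (h : b ∈ cIco a c) : cIco a b ⊆ cIco a c := by
  rcases h with rfl | h
  · rintro x (rfl | hx)
    exacts [left_mem_cIco _ _, (sbtw_irrefl_left_right hx).elim]
  · exact cIco_subset_cIco h

theorem disjoint_cIco_swap (hab : a ≠ b) : Disjoint (cIco a b) (cIco b a) := by
  rw [Set.disjoint_left]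
  rintro x (rfl | hx)
  · exact right_notMem_cIco hab.symm
  · rintro (rfl | hx')
    exacts [sbtw_irrefl_right hx, sbtw_asymm hx hx']

theorem disjoint_cIco_of_sbtw (h : sbtw a b c) : Disjoint (cIco a b) (cIco b c) :=
  (disjoint_cIco_swap (ne_of_sbtw_left h)).mono_right (cIco_subset_cIco h.cyclic_left)

theorem disjoint_cIco_of_sbtw_of_sbtw (habc : sbtw a b c) (hcda : sbtw c d a) :
    Disjoint (cIco a b) (cIco c d) :=
  (disjoint_cIco_swap (ne_of_sbtw_left_right habc)).mono (cIco_subset_cIco habc)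
    (cIco_subset_cIco hcda)

end CircularOrder

section Noncrossing

variable {V W α : Type*} [CircularOrder α] {G : SimpleGraph V} {pos : V → α}

/-- Draw the vertices of `G` on a circle, `v` at the point `pos v`. The chord from `a` to `c`
is crossed when an edge of `G` joins a vertex of the open arc from `a` to `c` to a vertex of the
complementary open arc. -/
def IsCrossed (G : SimpleGraph V) (pos : V → α) (a c : V) : Prop :=
  ∃ b d, G.Adj b d ∧ sbtw (pos a) (pos b) (pos c) ∧ sbtw (pos c) (pos d) (pos a)

/-- No two edges of `G` cross in the drawing `pos`: the circle bounds an outerplanar drawing. -/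
def IsNoncrossing (G : SimpleGraph V) (pos : V → α) : Prop :=
  ∀ ⦃a c⦄, G.Adj a c → ¬ IsCrossed G pos a c

/-- No edge can be added to `G` without crossing an edge of `G` in the drawing `pos`. -/
def IsSaturated (G : SimpleGraph V) (pos : V → α) : Prop :=
  ∀ ⦃a c⦄, a ≠ c → ¬ G.Adj a c → IsCrossed G pos a c

theorem IsCrossed.symm {a c : V} : IsCrossed G pos a c → IsCrossed G pos c a :=
  fun ⟨b, d, hbd, habc, hcda⟩ => ⟨d, b, hbd.symm, hcda, habc⟩

theorem IsCrossed.mono {G' : SimpleGraph V} {a c : V} (hG : G ≤ G') :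
    IsCrossed G pos a c → IsCrossed G' pos a c :=
  fun ⟨b, d, hbd, hcross⟩ => ⟨b, d, hG hbd, hcross⟩

theorem exists_adj_sbtw_of_connected (hpos : pos.Injective) {B : Set V}
    (hB : (G.induce B).Connected) {x y b d : V} (hx : x ∉ B) (hy : y ∉ B) (hb : b ∈ B)
    (hd : d ∈ B) (hxby : sbtw (pos x) (pos b) (pos y)) (hydx : sbtw (pos y) (pos d) (pos x)) :
    ∃ u ∈ B, ∃ v ∈ B, G.Adj u v ∧ sbtw (pos x) (pos u) (pos y) ∧
      sbtw (pos y) (pos v) (pos x) := by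
  obtain ⟨p⟩ := hB.preconnected ⟨b, hb⟩ ⟨d, hd⟩
  obtain ⟨⟨⟨u, v⟩, huv⟩, -, hu, hv⟩ :=
    p.exists_boundary_dart {w | sbtw (pos x) (pos w) (pos y)} hxby (sbtw_asymm · hydx)
  have ne_pos {w z : V} (hw : w ∈ B) (hz : z ∉ B) : pos w ≠ pos z :=
    hpos.ne (ne_of_mem_of_not_mem hw hz)
  exact ⟨u, u.2, v, v.2, huv, hu, (sbtw_or_sbtw_of_ne (ne_pos v.2 hx).symm (ne_pos v.2 hy)
    (ne_of_sbtw_left_right hxby).symm).resolve_left hv⟩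

theorem IsNoncrossing.not_sbtw_of_connected (h : IsNoncrossing G pos) (hpos : pos.Injective)
    {A B : Set V} (hA : (G.induce A).Connected) (hB : (G.induce B).Connected)
    (hAB : Disjoint A B) {a b c d : V} (ha : a ∈ A) (hb : b ∈ B) (hc : c ∈ A) (hd : d ∈ B)
    (habc : sbtw (pos a) (pos b) (pos c)) : ¬ sbtw (pos c) (pos d) (pos a) := by
  intro hcda
  have notMem_B {v : V} (hv : v ∈ A) : v ∉ B := Set.disjoint_left.1 hAB hv
  have notMem_A {v : V} (hv : v ∈ B) : v ∉ A := Set.disjoint_right.1 hAB hv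
  obtain ⟨u, hu, v, hv, huv, hauc, hcva⟩ :=
    exists_adj_sbtw_of_connected hpos hB (notMem_B ha) (notMem_B hc) hb hd habc hcda
  obtain ⟨x, -, y, -, hxy, huxv, hvyu⟩ :=
    exists_adj_sbtw_of_connected hpos hA (notMem_A hu) (notMem_A hv) hc ha
      (sbtw_right_of_sbtw_of_sbtw hauc hcva) (sbtw_right_of_sbtw_of_sbtw hcva hauc)
  exact h huv ⟨x, y, hxy, huxv, hvyu⟩

theorem IsNoncrossing.exists_of_hasMinor (h : IsNoncrossing G pos) (hpos : pos.Injective)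
    {H : SimpleGraph W} (hH : HasMinor G H) :
    ∃ q : W → α, q.Injective ∧ IsNoncrossing H q := by
  obtain ⟨f, hne, hconn, hdisj, hadj⟩ := hH
  choose r hr using hne
  have hr_inj : r.Injective := fun u v huv =>
    by_contra fun hne => Set.disjoint_left.1 (hdisj hne) (hr u) (huv ▸ hr v)
  have connected_union {u v : W} (huv : H.Adj u v) : (G.induce (f u ∪ f v)).Connected := by
    obtain ⟨x, hx, y, hy, hxy⟩ := hadj huv
    exact connected_induce_union (hconn u).preconnected (hconn v).preconnected hx hy hxy
  refine ⟨pos ∘ r, hpos.comp hr_inj, fun a c hac hcross => ?_⟩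
  obtain ⟨b, d, hbd, habc, hcda⟩ := hcross
  have disjoint_of_sbtw {u v w : W} (huvw : sbtw ((pos ∘ r) u) ((pos ∘ r) v) ((pos ∘ r) w)) :
      Disjoint (f u ∪ f w) (f v) :=
    Set.disjoint_union_left.2 ⟨hdisj (ne_of_apply_ne _ (ne_of_sbtw_left huvw)),
      hdisj (ne_of_apply_ne _ (ne_of_sbtw_left huvw.cyclic_left).symm)⟩
  refine h.not_sbtw_of_connected hpos (connected_union hac) (connected_union hbd)
    (Set.disjoint_union_right.2 ⟨disjoint_of_sbtw habc, ?_⟩)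
    (.inl (hr a)) (.inl (hr b)) (.inr (hr c)) (.inr (hr d)) habc hcda
  exact Set.union_comm (f a) (f c) ▸ disjoint_of_sbtw hcda

theorem IsNoncrossing.sbtw_of_adj_cycle (h : IsNoncrossing G pos) (hpos : pos.Injective)
    {a b c d : V} (hab : G.Adj a b) (hbc : G.Adj b c) (hcd : G.Adj c d) (hda : G.Adj d a)
    (hbd : b ≠ d) (habc : sbtw (pos a) (pos b) (pos c)) : sbtw (pos c) (pos d) (pos a) := by
  have hac := ne_of_sbtw_left_right habc
  refine (sbtw_or_sbtw_of_ne (hpos.ne hcd.ne) (hpos.ne hda.ne) hac).resolve_right fun hadc => ?_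
  rcases sbtw_or_sbtw_of_ne (hpos.ne hab.ne) (hpos.ne hbd) (hpos.ne hda.ne) with habd | hdba
  · exact h hda.symm ⟨b, c, hbc, habd, hadc.cyclic_left⟩
  · exact h hab ⟨d, c, hcd.symm, hdba.cyclic_right, habc.cyclic_left⟩

theorem not_isNoncrossing_completeGraph_four {q : Fin 4 → α} (hq : q.Injective) :
    ¬ IsNoncrossing (completeGraph (Fin 4)) q := by
  intro h
  have not_sbtw (a b c d : Fin 4) (hab : a ≠ b := by decide) (hbc : b ≠ c := by decide)
      (hcd : c ≠ d := by decide) (hda : d ≠ a := by decide) (hac : a ≠ c := by decide)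
      (hbd : b ≠ d := by decide) : ¬ sbtw (q a) (q b) (q c) := fun hb =>
    h hac ⟨b, d, hbd, hb, h.sbtw_of_adj_cycle hq hab hbc hcd hda hbd hb⟩
  exact (sbtw_or_sbtw_of_ne (hq.ne (by decide)) (hq.ne (by decide)) (hq.ne (by decide))).elim
    (not_sbtw 0 1 2 3) (not_sbtw 2 1 0 3)

theorem not_isNoncrossing_completeBipartiteGraph_two_three {q : Fin 2 ⊕ Fin 3 → α}
    (hq : q.Injective) : ¬ IsNoncrossing (completeBipartiteGraph (Fin 2) (Fin 3)) q := by
  intro h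
  have opposite {i j : Fin 2} {k l : Fin 3} (hkl : k ≠ l)
      (hk : sbtw (q (.inl i)) (q (.inr k)) (q (.inl j))) :
      sbtw (q (.inl j)) (q (.inr l)) (q (.inl i)) :=
    h.sbtw_of_adj_cycle hq (by simp) (by simp) (by simp) (by simp) (by simpa) hk
  have not_sbtw (i j : Fin 2) : ¬ sbtw (q (.inl i)) (q (.inr 0)) (q (.inl j)) := fun h₀ =>
    have h₁ := opposite (l := 1) (by decide) h₀
    have h₂ := opposite (l := 2) (by decide) h₀
    sbtw_asymm (opposite (by decide) h₁) h₂
  exact (sbtw_or_sbtw_of_ne (hq.ne (by simp)) (hq.ne (by simp)) (hq.ne (by simp))).elim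
    (not_sbtw 0 1) (not_sbtw 1 0)

theorem IsNoncrossing.isOuterplanar (h : IsNoncrossing G pos) (hpos : pos.Injective) :
    IsOuterplanar G := by
  refine ⟨fun hK => ?_, fun hK => ?_⟩ <;> obtain ⟨q, hq, hq'⟩ := h.exists_of_hasMinor hpos hK
  exacts [not_isNoncrossing_completeGraph_four hq hq',
    not_isNoncrossing_completeBipartiteGraph_two_three hq hq']

theorem IsNoncrossing.comap {G : SimpleGraph W} {pos : W → α} (h : IsNoncrossing G pos)
    (f : V → W) : IsNoncrossing (G.comap f) (pos ∘ f) :=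
  fun _ _ hac ⟨b, d, hbd, hb, hd⟩ => h hac ⟨f b, f d, hbd, hb, hd⟩

theorem IsSaturated.mono {G' : SimpleGraph V} (h : IsSaturated G pos) (hG : G ≤ G') :
    IsSaturated G' pos :=
  fun _ _ hne hac => (h hne fun hac' => hac (hG hac')).mono hG

theorem exists_adj_symm {s t : Set V} :
    (∃ u ∈ s, ∃ v ∈ t, G.Adj u v) → ∃ u ∈ t, ∃ v ∈ s, G.Adj u v :=
  fun ⟨u, hu, v, hv, huv⟩ => ⟨v, hv, u, hu, huv.symm⟩

theorem hasMinor_completeGraph_of_lt [LinearOrder W] (f : W → Set V)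
    (hconn : ∀ i, (G.induce (f i)).Connected) (hdisj : ∀ i j, i < j → Disjoint (f i) (f j))
    (hadj : ∀ i j, i < j → ∃ a ∈ f i, ∃ b ∈ f j, G.Adj a b) : HasMinor G (completeGraph W) := by
  refine ⟨f, fun i => Set.nonempty_coe_sort.1 (hconn i).nonempty, hconn, fun i j hij => ?_,
    fun i j hij => ?_⟩ <;> rcases lt_or_gt_of_ne hij with hij | hij
  · exact hdisj i j hij
  · exact (hdisj j i hij).symm
  · exact hadj i j hij
  · exact exists_adj_symm (hadj j i hij)

variable [Finite V]

theorem ncard_preimage_cIoo_lt_left {p q : α} {v : V} (h : sbtw p (pos v) q) :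
    (pos ⁻¹' Set.cIoo p (pos v)).ncard < (pos ⁻¹' Set.cIoo p q).ncard :=
  Set.ncard_lt_ncard ⟨fun _ hx => sbtw_trans_right hx h, fun hsub => sbtw_irrefl_right (hsub h)⟩

theorem ncard_preimage_cIoo_lt_right {p q : α} {v : V} (h : sbtw p (pos v) q) :
    (pos ⁻¹' Set.cIoo (pos v) q).ncard < (pos ⁻¹' Set.cIoo p q).ncard :=
  Set.ncard_lt_ncard ⟨fun _ hx => h.trans_left hx, fun hsub => sbtw_irrefl_left (hsub h)⟩

theorem IsSaturated.exists_adj_mem_cIco (h : IsSaturated G pos) (hpos : pos.Injective) {a c : V}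
    (hac : a ≠ c) : ∃ w, pos w ∈ cIco (pos a) (pos c) ∧ G.Adj w c := by
  obtain ⟨w, hw, hmin⟩ := Set.exists_min_image (pos ⁻¹' cIco (pos a) (pos c))
    (fun w => (pos ⁻¹' Set.cIoo (pos w) (pos c)).ncard) (Set.toFinite _) ⟨a, left_mem_cIco _ _⟩
  have hwc : w ≠ c := by
    rintro rfl
    exact right_notMem_cIco (hpos.ne hac) hw
  refine ⟨w, hw, by_contra fun hadj => ?_⟩
  obtain ⟨x, -, -, hwxc, -⟩ := h hwc hadj
  have hx : pos x ∈ cIco (pos a) (pos c) := by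
    rcases hw with hw | hw
    exacts [.inr (hw ▸ hwxc), .inr (hw.trans_left hwxc)]
  exact (hmin x hx).not_gt (ncard_preimage_cIoo_lt_right hwxc)

theorem IsSaturated.connected_induce_cIco (h : IsSaturated G pos) (hpos : pos.Injective) (a : V)
    (p : α) : (G.induce (pos ⁻¹' cIco (pos a) p)).Connected := by
  rw [connected_iff_exists_forall_reachable]
  refine ⟨⟨a, left_mem_cIco _ _⟩, ?_⟩
  rintro ⟨v, hv⟩
  induction v using (measure fun v => (pos ⁻¹' Set.cIoo (pos a) (pos v)).ncard).wf.induction with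
  | _ v ih =>
  by_cases hav : a = v
  · subst hav
    rfl
  obtain ⟨w, hw, hwv⟩ := h.exists_adj_mem_cIco hpos hav
  have hwp : pos w ∈ cIco (pos a) p := cIco_subset_cIco_of_mem hv hw
  refine .trans ?_ (Adj.reachable (G := G.induce _) (u := ⟨w, hwp⟩) hwv)
  rcases hw with hwa | hw
  · simp [hpos hwa]
  · exact ih w (ncard_preimage_cIoo_lt_left hw) hwp

theorem IsSaturated.exists_adj_cIco_cIco (h : IsSaturated G pos) (hpos : pos.Injective) {x y z : V}
    (hxyz : sbtw (pos x) (pos y) (pos z)) :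
    ∃ u ∈ pos ⁻¹' cIco (pos x) (pos y), ∃ v ∈ pos ⁻¹' cIco (pos y) (pos z), G.Adj u v := by
  obtain ⟨u, hu, huy⟩ := h.exists_adj_mem_cIco hpos (ne_of_apply_ne pos (ne_of_sbtw_left hxyz))
  exact ⟨u, hu, y, left_mem_cIco _ _, huy⟩

-- Consecutive vertices on the circle are adjacent, so the four arcs into which the ends of two
-- crossing edges cut the circle are branch sets; opposite arcs are joined by those two edges.
theorem IsSaturated.hasMinor_completeGraph_four (h : IsSaturated G pos) (hpos : pos.Injective)
    {a c : V} (hac : G.Adj a c) (hcross : IsCrossed G pos a c) :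
    HasMinor G (completeGraph (Fin 4)) := by
  obtain ⟨b, d, hbd, habc, hcda⟩ := hcross
  have hbcd := sbtw_right_of_sbtw_of_sbtw habc hcda
  have hdab := sbtw_right_of_sbtw_of_sbtw hcda habc
  let arc (x y : V) : Set V := pos ⁻¹' cIco (pos x) (pos y)
  have disjoint_next {x y z : V} (hxyz : sbtw (pos x) (pos y) (pos z)) :
      Disjoint (arc x y) (arc y z) := (disjoint_cIco_of_sbtw hxyz).preimage pos
  have disjoint_opposite {x y z w : V} (hxyz : sbtw (pos x) (pos y) (pos z))
      (hzwx : sbtw (pos z) (pos w) (pos x)) : Disjoint (arc x y) (arc z w) :=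
    (disjoint_cIco_of_sbtw_of_sbtw hxyz hzwx).preimage pos
  refine hasMinor_completeGraph_of_lt ![arc a b, arc b c, arc c d, arc d a] ?_ ?_ ?_
  · intro i
    fin_cases i <;> exact h.connected_induce_cIco hpos _ _
  · have h₀₁ := disjoint_next habc
    have h₀₂ := disjoint_opposite habc hcda
    have h₀₃ := (disjoint_next hdab).symm
    have h₁₂ := disjoint_next hbcd
    have h₁₃ := disjoint_opposite hbcd hdab
    have h₂₃ := disjoint_next hcda
    intro i j hij
    fin_cases i <;> fin_cases j <;> first | exact absurd hij (by decide) | assumption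
  · have adj_opposite {x z : V} (y w : V) (hxz : G.Adj x z) :
        ∃ u ∈ arc x y, ∃ v ∈ arc z w, G.Adj u v :=
      ⟨x, left_mem_cIco _ _, z, left_mem_cIco _ _, hxz⟩
    have h₀₁ := h.exists_adj_cIco_cIco hpos habc
    have h₀₂ := adj_opposite b d hac
    have h₀₃ := exists_adj_symm (h.exists_adj_cIco_cIco hpos hdab)
    have h₁₂ := h.exists_adj_cIco_cIco hpos hbcd
    have h₁₃ := adj_opposite c a hbd
    have h₂₃ := h.exists_adj_cIco_cIco hpos hcda
    intro i j hij
    fin_cases i <;> fin_cases j <;> first | exact absurd hij (by decide) | assumption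

theorem IsNoncrossing.isMaxOuterplanar (h : IsNoncrossing G pos) (hs : IsSaturated G pos)
    (hpos : pos.Injective) : IsMaxOuterplanar G := by
  refine ⟨h.isOuterplanar hpos, fun a c hne hac hout => hout.1 ?_⟩
  have hle : G ≤ G ⊔ fromEdgeSet {s(a, c)} := le_sup_left
  exact (hs.mono hle).hasMinor_completeGraph_four hpos (by simp [hne]) ((hs hne hac).mono hle)

end Noncrossing

section Strip

variable {s s' : ℕ → Bool} {n : ℕ}

/-- The infinite triangulated strip whose vertices `0, 1, 2, …` are added one at a time, vertex `k`
on the side `s k`: it is joined to every earlier vertex that is still the last one on its side. -/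
def strip (s : ℕ → Bool) : SimpleGraph ℕ :=
  fromRel fun i j => i < j ∧ ∀ m, i < m → m < j → s m ≠ s i

/-- A point for each vertex of the strip on the integers, taken as a circle: the two sides run from
`0` in opposite directions. -/
def stripPos (s : ℕ → Bool) (i : ℕ) : ℤ := if s i then i else -i

/-- The part of the strip formed by its first `n` vertices. -/
abbrev finStrip (s : ℕ → Bool) (n : ℕ) : SimpleGraph (Fin n) := (strip s).comap Fin.val

theorem strip_adj_of_lt {i j : ℕ} (hij : i < j) :
    (strip s).Adj i j ↔ ∀ m, i < m → m < j → s m = !s i := by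
  simp [strip, hij, hij.ne, hij.not_gt, Bool.eq_not]

theorem strip_adj_succ (i : ℕ) : (strip s).Adj i (i + 1) :=
  (strip_adj_of_lt i.lt_succ_self).2 fun _ _ _ => by omega

theorem strip_adj_add_two {i : ℕ} : (strip s).Adj i (i + 2) ↔ s (i + 1) = !s i := by
  rw [strip_adj_of_lt (by omega)]
  refine ⟨fun h => h (i + 1) (by omega) (by omega), fun h m him hmi => ?_⟩
  rwa [show m = i + 1 by omega]

theorem stripPos_injective : (stripPos s).Injective := by
  intro i j h
  unfold stripPos at h
  split_ifs at h <;> omega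

theorem side_eq_not_and_between_of_sbtw {a b c d : ℕ} (hac : a < c) (hadj : (strip s).Adj a c)
    (habc : sbtw (stripPos s a) (stripPos s b) (stripPos s c))
    (hcda : sbtw (stripPos s c) (stripPos s d) (stripPos s a)) :
    s c = !s a ∧ (b < c ∧ c < d ∨ d < c ∧ c < b) := by
  have hb := (strip_adj_of_lt hac).1 hadj b
  have hd := (strip_adj_of_lt hac).1 hadj d
  simp only [Int.sbtw_iff, stripPos] at habc hcda
  cases hsa : s a <;> cases hsb : s b <;> cases hsc : s c <;> cases hsd : s d <;>
    simp only [hsa, hsb, hsc, hsd] at hb hd habc hcda ⊢ <;> grind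

theorem isNoncrossing_strip : IsNoncrossing (strip s) (stripPos s) := by
  intro a c hac hcross
  wlog h : a < c generalizing a c
  · exact this hac.symm hcross.symm (lt_of_le_of_ne (not_lt.1 h) hac.ne')
  obtain ⟨b, d, hbd, habc, hcda⟩ := hcross
  obtain ⟨hsides, hsep⟩ := side_eq_not_and_between_of_sbtw h hac habc hcda
  have last_on_side {i j : ℕ} (hij : (strip s).Adj i j) (hic : i < c) (hcj : c < j) : i = a := by
    have hi := (strip_adj_of_lt (hic.trans hcj)).1 hij
    have ha := (strip_adj_of_lt h).1 hac i
    have hsi := hi c hic hcj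
    have hia := hi a
    grind
  rcases hsep with ⟨hbc, hcd⟩ | ⟨hdc, hcb⟩
  · exact sbtw_irrefl_left (last_on_side hbd hbc hcd ▸ habc)
  · exact sbtw_irrefl_right (last_on_side hbd.symm hdc hcb ▸ hcda)

theorem exists_last_side_eq (h₀₁ : s 1 = !s 0) {k : ℕ} (hk : 2 ≤ k) (τ : Bool) :
    ∃ t < k, s t = τ ∧ ∀ m, t < m → m < k → s m = !τ := by
  have hne : ((Finset.range k).filter (s · = τ)).Nonempty := by
    by_cases h : s 0 = τ
    · exact ⟨0, by simp [h]; omega⟩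
    · exact ⟨1, by simp [h₀₁, Bool.eq_not.2 h]; omega⟩
  obtain ⟨t, ht, hmax⟩ := Finset.exists_max_image _ id hne
  rw [Finset.mem_filter, Finset.mem_range] at ht
  refine ⟨t, ht.1, ht.2, fun m htm hmk => Bool.eq_not.2 fun hm => ?_⟩
  exact (hmax m (by simp [hmk, hm])).not_gt htm

theorem exists_crossing_of_not_strip_adj (h₀₁ : s 1 = !s 0) {i j : ℕ} (hij : i < j)
    (hadj : ¬ (strip s).Adj i j) :
    ∃ b < j, ∃ d < j, (strip s).Adj b d ∧ sbtw (stripPos s i) (stripPos s b) (stripPos s j) ∧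
      sbtw (stripPos s j) (stripPos s d) (stripPos s i) := by
  rw [strip_adj_of_lt hij] at hadj
  push Not at hadj
  obtain ⟨m, him, hmj, hm⟩ := hadj
  rw [Bool.ne_not] at hm
  have hm₂ : 2 ≤ m := by
    by_contra!
    obtain ⟨rfl, rfl⟩ : i = 0 ∧ m = 1 := by omega
    simp [h₀₁] at hm
  obtain ⟨t, htm, ht, hlast⟩ := exists_last_side_eq h₀₁ hm₂ (!s i)
  have htm_adj : (strip s).Adj t m := (strip_adj_of_lt htm).2 (ht ▸ hlast)
  have hcross : sbtw (stripPos s i) (stripPos s m) (stripPos s j) ∧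
        sbtw (stripPos s j) (stripPos s t) (stripPos s i) ∨
      sbtw (stripPos s i) (stripPos s t) (stripPos s j) ∧
        sbtw (stripPos s j) (stripPos s m) (stripPos s i) := by
    simp only [Int.sbtw_iff, stripPos]
    grind
  rcases hcross with h | h
  · exact ⟨m, hmj, t, htm.trans hmj, htm_adj.symm, h⟩
  · exact ⟨t, htm.trans hmj, m, hmj, htm_adj, h⟩

theorem isSaturated_finStrip (h₀₁ : s 1 = !s 0) :
    IsSaturated (finStrip s n) (stripPos s ∘ Fin.val) := by
  intro i j hij hadj
  wlog h : i < j generalizing i j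
  · exact (this hij.symm (hadj ·.symm) (lt_of_le_of_ne (not_lt.1 h) hij.symm)).symm
  obtain ⟨b, hb, d, hd, hcross⟩ := exists_crossing_of_not_strip_adj h₀₁ h hadj
  exact ⟨⟨b, hb.trans j.2⟩, ⟨d, hd.trans j.2⟩, hcross⟩

theorem isMaxOuterplanar_finStrip (h₀₁ : s 1 = !s 0) : IsMaxOuterplanar (finStrip s n) :=
  (isNoncrossing_strip.comap Fin.val).isMaxOuterplanar (isSaturated_finStrip h₀₁)
    (stripPos_injective.comp Fin.val_injective)

theorem exists_forall_lt_strip_adj_iff (h₀₁ : s 1 = !s 0) {k : ℕ} (hk : 2 ≤ k) :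
    ∃ t, t + 1 < k ∧ ∀ i < k, (strip s).Adj i k ↔ i = t ∨ i + 1 = k := by
  obtain ⟨t, htk, ht, hlast⟩ := exists_last_side_eq h₀₁ hk (!s (k - 1))
  have ht₁ : t ≠ k - 1 := by
    rintro rfl
    simp at ht
  refine ⟨t, by omega, fun i hik => ⟨fun hi => ?_, ?_⟩⟩
  · rw [strip_adj_of_lt hik] at hi
    have hi₁ := hi (k - 1)
    have hit := hi t
    have := hlast i
    grind
  · rintro (rfl | rfl)
    exacts [(strip_adj_of_lt htk).2 (ht ▸ hlast), strip_adj_succ i]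

theorem ncard_neighborSet_finStrip (v : Fin n) :
    ((finStrip s n).neighborSet v).ncard = ((strip s).neighborSet v ∩ Set.Iio n).ncard := by
  rw [← Set.ncard_image_of_injective _ Fin.val_injective]
  congr 1
  ext i
  exact ⟨fun ⟨w, hw, hi⟩ => hi ▸ ⟨hw, w.2⟩, fun ⟨hi, hin⟩ => ⟨⟨i, hin⟩, hi, rfl⟩⟩

/-- The vertices `0, 1, 2, 3` of the strip are added on alternating sides. -/
structure StartsAlternating (s : ℕ → Bool) : Prop where
  one : s 1 = !s 0
  two : s 2 = s 0
  three : s 3 = s 1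

namespace StartsAlternating

theorem neighborSet_strip_zero (h : StartsAlternating s) : (strip s).neighborSet 0 = {1, 2} := by
  ext v
  simp only [mem_neighborSet, Set.mem_insert_iff, Set.mem_singleton_iff]
  constructor
  · intro hadj
    have hv := Nat.pos_of_ne_zero hadj.ne'
    have := (strip_adj_of_lt hv).1 hadj 2
    grind [h.two]
  · rintro (rfl | rfl)
    exacts [strip_adj_succ 0, strip_adj_add_two.2 h.one]

theorem neighborSet_strip_one (h : StartsAlternating s) :
    (strip s).neighborSet 1 = {0, 2, 3} := by
  ext v
  simp only [mem_neighborSet, Set.mem_insert_iff, Set.mem_singleton_iff]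
  constructor
  · intro hadj
    by_contra! hv
    have h₁v : 1 < v := by grind [hadj.ne]
    have := (strip_adj_of_lt h₁v).1 hadj 3
    grind [h.three]
  · rintro (rfl | rfl | rfl)
    exacts [(strip_adj_succ 0).symm, strip_adj_succ 1, strip_adj_add_two.2 (by simp [h.two, h.one])]

theorem subset_neighborSet_strip_two (h : StartsAlternating s) :
    {0, 1, 3, 4} ⊆ (strip s).neighborSet 2 := by
  rintro v (rfl | rfl | rfl | rfl)
  exacts [(strip_adj_add_two.2 h.one).symm, (strip_adj_succ 1).symm, strip_adj_succ 2,
    strip_adj_add_two.2 (by rw [h.three, h.two, h.one])]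

theorem ncard_neighborSet_finStrip_zero (h : StartsAlternating s) (hn : 3 ≤ n) :
    ((finStrip s n).neighborSet ⟨0, by omega⟩).ncard = 2 := by
  rw [ncard_neighborSet_finStrip, h.neighborSet_strip_zero, Set.inter_eq_left.2 (by grind),
    Set.ncard_pair (by decide)]

theorem ncard_neighborSet_finStrip_one (h : StartsAlternating s) (hn : 4 ≤ n) :
    ((finStrip s n).neighborSet ⟨1, by omega⟩).ncard = 3 := by
  rw [ncard_neighborSet_finStrip, h.neighborSet_strip_one, Set.inter_eq_left.2 (by grind),
    Set.ncard_eq_three.2 ⟨0, 2, 3, by simp⟩]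

theorem three_lt_ncard_neighborSet_finStrip_two (h : StartsAlternating s) (hn : 5 ≤ n) :
    3 < ((finStrip s n).neighborSet ⟨2, by omega⟩).ncard := by
  rw [ncard_neighborSet_finStrip]
  calc 3 < ({0, 1, 3, 4} : Set ℕ).ncard := by rw [Set.ncard_eq_toFinset_card']; decide
    _ ≤ ((strip s).neighborSet 2 ∩ Set.Iio n).ncard :=
      Set.ncard_le_ncard (Set.subset_inter h.subset_neighborSet_strip_two (by grind))
        ((Set.finite_Iio n).inter_of_right _)

theorem two_lt_ncard_neighborSet_finStrip (h : StartsAlternating s) (hn : 4 ≤ n) {v : Fin n}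
    (hv : v.val ≠ 0) (hvn : v + 1 < n) : 2 < ((finStrip s n).neighborSet v).ncard := by
  obtain ⟨u, hun, huv, hadj⟩ :
      ∃ u < n, (u + 1 < v ∨ u = v + 2) ∧ (strip s).Adj v u := by
    rcases (by omega : v.val = 1 ∨ 2 ≤ v.val) with hv | hv
    · refine ⟨3, by omega, .inr (by omega), ?_⟩
      rw [hv, strip_adj_add_two, h.two, h.one, Bool.not_not]
    · obtain ⟨t, ht, hadj⟩ := exists_forall_lt_strip_adj_iff h.one hv
      exact ⟨t, by omega, .inl ht, ((hadj t (by omega)).2 (.inl rfl)).symm⟩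
  have hpred : (strip s).Adj (v - 1) v := by
    simpa [Nat.sub_add_cancel (Nat.pos_of_ne_zero hv)] using strip_adj_succ (s := s) (v - 1)
  rw [ncard_neighborSet_finStrip, Set.two_lt_ncard_iff ((Set.finite_Iio n).inter_of_right _)]
  exact ⟨v - 1, v + 1, u, ⟨hpred.symm, by grind⟩, ⟨strip_adj_succ _, hvn⟩, ⟨hadj, hun⟩,
    by omega, by omega, by omega⟩

end StartsAlternating

theorem ncard_neighborSet_finStrip_last (h₀₁ : s 1 = !s 0) {v : Fin n} (hv : 2 ≤ v.val)
    (hvn : v + 1 = n) : ((finStrip s n).neighborSet v).ncard = 2 := by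
  obtain ⟨t, ht, hadj⟩ := exists_forall_lt_strip_adj_iff h₀₁ hv
  have : (strip s).neighborSet v ∩ Set.Iio n = {t, v.val - 1} := by
    ext i
    have := hadj i
    have := (strip s).adj_comm i v
    have := (strip s).irrefl (v := v)
    grind [mem_neighborSet]
  rw [ncard_neighborSet_finStrip, this, Set.ncard_pair (by omega)]

theorem StartsAlternating.isPathLike_finStrip (h : StartsAlternating s) (hn : 4 ≤ n) :
    IsPathLike (finStrip s n) := by
  refine ⟨isMaxOuterplanar_finStrip h.one, ?_⟩
  have : {v | ((finStrip s n).neighborSet v).ncard = 2} =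
      {⟨0, by omega⟩, ⟨n - 1, by omega⟩} := by
    ext v
    simp only [Set.mem_ofPred_eq, Set.mem_insert_iff, Set.mem_singleton_iff]
    constructor
    · intro hv
      by_contra! hne
      exact (h.two_lt_ncard_neighborSet_finStrip hn (by grind) (by grind)).ne' hv
    · rintro (rfl | rfl)
      exacts [h.ncard_neighborSet_finStrip_zero (by omega),
        ncard_neighborSet_finStrip_last h.one (by grind) (by grind)]
  rw [this, Set.ncard_pair (by grind)]

theorem StartsAlternating.iso_apply_one (h : StartsAlternating s) (h' : StartsAlternating s')
    (hn : 5 ≤ n) (e : finStrip s n ≃g finStrip s' n) (he : e ⟨0, by omega⟩ = ⟨0, by omega⟩) :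
    e ⟨1, by omega⟩ = ⟨1, by omega⟩ := by
  have hdeg : ((finStrip s' n).neighborSet (e (⟨1, by omega⟩ : Fin n))).ncard = 3 :=
    (Nat.card_congr (e.mapNeighborSet _)).symm.trans (h.ncard_neighborSet_finStrip_one (by omega))
  have hadj : (finStrip s' n).Adj (e ⟨0, by omega⟩) (e ⟨1, by omega⟩) :=
    e.map_adj_iff.2 (strip_adj_succ 0)
  rw [he] at hadj
  have hmem : (e ⟨1, by omega⟩).val ∈ (strip s').neighborSet 0 := hadj
  rw [h'.neighborSet_strip_zero] at hmem
  rcases hmem with h₁ | h₂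
  · exact Fin.ext h₁
  · rw [show e ⟨1, by omega⟩ = ⟨2, by omega⟩ from Fin.ext h₂] at hdeg
    exact ((h'.three_lt_ncard_neighborSet_finStrip_two hn).ne' hdeg).elim

theorem finStrip_iso_apply_eq_self (h₀₁ : s 1 = !s 0) (h₀₁' : s' 1 = !s' 0)
    (e : finStrip s n ≃g finStrip s' n) (he : ∀ i : Fin n, i.val < 2 → e i = i) (k : Fin n) :
    e k = k := by
  induction k using WellFoundedLT.induction with
  | ind k ih =>
  rcases lt_or_ge k.val 2 with hk | hk
  · exact he k hk
  have hke : k ≤ e k := not_lt.1 fun hlt => hlt.ne (e.injective (ih _ hlt))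
  obtain ⟨t, htk, hadj⟩ := exists_forall_lt_strip_adj_iff h₀₁ hk
  obtain ⟨t', -, hadj'⟩ := exists_forall_lt_strip_adj_iff h₀₁' (hk.trans hke)
  have eq_or_eq {i : ℕ} (hik : i < k) (hi : i = t ∨ i + 1 = k) : i = t' ∨ i + 1 = e k := by
    refine (hadj' i (hik.trans_le hke)).1 ?_
    have := e.map_adj_iff (v := ⟨i, hik.trans k.2⟩) (w := k) |>.2 ((hadj i hik).2 hi)
    rwa [ih _ hik] at this
  have ht := eq_or_eq (by omega) (.inl rfl)
  have hpred := eq_or_eq (i := k - 1) (by omega) (.inr (by omega))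
  grind

theorem side_eq_of_finStrip_eq (h : finStrip s n = finStrip s' n) (h₀ : s 0 = s' 0) {k : ℕ}
    (hk : k + 1 < n) : s k = s' k := by
  induction k with
  | zero => exact h₀
  | succ k ih =>
    have hadj : (strip s).Adj k (k + 2) ↔ (strip s').Adj k (k + 2) :=
      iff_of_eq (congr_arg (·.Adj ⟨k, by omega⟩ ⟨k + 2, hk⟩) h)
    rw [strip_adj_add_two, strip_adj_add_two, ih (by omega)] at hadj
    have eq_of_iff : ∀ x y z : Bool, (x = !z ↔ y = !z) → x = y := by decide
    exact eq_of_iff _ _ _ hadj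

/-- The sides of a strip whose first four vertices alternate and whose next ones follow `b`. -/
def sideOfBits {m : ℕ} (b : Fin m → Bool) (k : ℕ) : Bool :=
  ([false, true, false, true] ++ List.ofFn b).getD k false

theorem startsAlternating_sideOfBits {m : ℕ} (b : Fin m → Bool) :
    StartsAlternating (sideOfBits b) :=
  ⟨rfl, rfl, rfl⟩

theorem sideOfBits_add_four {m : ℕ} (b : Fin m → Bool) (i : Fin m) :
    sideOfBits b (i + 4) = b i := by
  simp [sideOfBits]

/-- The strip on the sides given by `b`, with its initial ear. There is no bit for the last vertex,
whose side does not affect the strip. -/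
def stripWithEar (hn : 5 ≤ n) (b : Fin (n - 5) → Bool) :
    {p : SimpleGraph (Fin n) × Fin n // IsPathLike p.1 ∧ (p.1.neighborSet p.2).ncard = 2} :=
  ⟨(finStrip (sideOfBits b) n, ⟨0, by omega⟩),
    (startsAlternating_sideOfBits b).isPathLike_finStrip (by omega),
    (startsAlternating_sideOfBits b).ncard_neighborSet_finStrip_zero (by omega)⟩

theorem mk_stripWithEar_injective (hn : 5 ≤ n) :
    Function.Injective fun b => Quotient.mk (earSetoid n) (stripWithEar hn b) := by
  intro b b' h
  obtain ⟨e, he⟩ : ∃ e : finStrip (sideOfBits b) n ≃g finStrip (sideOfBits b') n,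
    e ⟨0, by omega⟩ = ⟨0, by omega⟩ := Quotient.exact h
  have hb := startsAlternating_sideOfBits b
  have hb' := startsAlternating_sideOfBits b'
  have he₁ := hb.iso_apply_one hb' (by omega) e he
  have hid := finStrip_iso_apply_eq_self hb.one hb'.one e fun
    | ⟨0, _⟩, _ => he
    | ⟨1, _⟩, _ => he₁
  have heq : finStrip (sideOfBits b) n = finStrip (sideOfBits b') n := by
    ext i j
    rw [← e.map_adj_iff, hid, hid]
  funext i
  simpa only [sideOfBits_add_four] using
    side_eq_of_finStrip_eq heq rfl (by omega : i.val + 4 + 1 < n)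

end Strip

/-- For `n ≥ 6`, there are at least `2^(n−5)` isomorphism classes of pairs `(H, Δ)` where `H`
is an `n`-vertex path-like maximal outerplanar graph and `Δ` is an ear of `H`. -/
theorem pathlike_ear_pairs_count (n : ℕ) (hn : 6 ≤ n) :
    2 ^ (n - 5) ≤ Nat.card (Quotient (earSetoid n)) := by
  have : Finite (Quotient (earSetoid n)) := Quotient.finite _
  simpa using Nat.card_le_card_of_injective _ (mk_stripWithEar_injective (by omega : 5 ≤ n))
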